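/- arXiv:1907.03662 — 2 statements merged into one kernel-verified Lean document; each statement's English description precedes it below -/
import Mathlib

section
/- Let 𝔫 be a finite-dimensional real Lie algebra with inner product ⟨·,·⟩ which is 2-step nilpotent, let 𝔷 be its center and 𝔳 = 𝔷^⊥, and let T be a skew-symmetric endomorphism of 𝔫. Then T satisfies the Killing–Yano equation (with respect to the Levi-Civita product ∇ of (𝔫,⟨·,·⟩)) if and only if T(𝔷) ⊆ 𝔷 (hence also T(𝔳) ⊆ 𝔳) and T⁅x,y⁆ = 3⁅Tx,y⁆ for all x,y ∈ 𝔳. -/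
/-- `x` belongs to the center of the Lie algebra `V`. -/
def IsCentral {V : Type*} [LieRing V] (x : V) : Prop := ∀ y : V, ⁅x, y⁆ = 0

/-- Membership in `𝔳 = 𝔷^⊥`, the orthogonal complement of the center with respect to the
inner product `B`. -/
def InVperp {V : Type*} [LieRing V] [LieAlgebra ℝ V]
    (B : V →ₗ[ℝ] V →ₗ[ℝ] ℝ) (x : V) : Prop :=
  ∀ z : V, IsCentral z → B x z = 0

/-- The Lie algebra `V` is 2-step nilpotent: non-abelian and `⁅⁅V,V⁆,V⁆ = 0`. -/
def TwoStepNilpotent (V : Type*) [LieRing V] : Prop :=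
  (∃ x y : V, ⁅x, y⁆ ≠ 0) ∧ ∀ x y z : V, ⁅⁅x, y⁆, z⁆ = 0

/-- A Killing–Yano tensor on `(V, B)`: a skew-symmetric endomorphism preserving the center
and satisfying `T⁅x,y⁆ = 3⁅Tx,y⁆` for `x, y ∈ 𝔳 = 𝔷^⊥`. -/
def IsKY {V : Type*} [LieRing V] [LieAlgebra ℝ V]
    (B : V →ₗ[ℝ] V →ₗ[ℝ] ℝ) (T : V →ₗ[ℝ] V) : Prop :=
  (∀ x y : V, B (T x) y = - B x (T y)) ∧
  (∀ z : V, IsCentral z → IsCentral (T z)) ∧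
  (∀ x y : V, InVperp B x → InVperp B y → T ⁅x, y⁆ = (3 : ℝ) • ⁅T x, y⁆)

/-- The Koszul formula characterizing the Levi-Civita product of `(V, B)`. -/
def IsLeviCivita {V : Type*} [LieRing V] [LieAlgebra ℝ V]
    (B : V →ₗ[ℝ] V →ₗ[ℝ] ℝ) (nab : V → V → V) : Prop :=
  ∀ x y z : V, 2 * B (nab x y) z = B ⁅x, y⁆ z - B ⁅y, z⁆ x + B ⁅z, x⁆ y

/-! Moving `T` across the metric in the Koszul formula turns the Killing–Yano equation into the
vanishing of `⟨⁅x, Ty⁆ - ⁅Tx, y⁆, w⟩ + ⟨A x w, y⟩ + ⟨A y w, x⟩` for all `x`, `y`, `w`, where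
`A x y = T⁅x, y⁆ - ⁅Tx, y⁆ - 2⁅x, Ty⁆`. Taking `x` and `w` central gives `T𝔷 ⊆ 𝔷`; then `A` takes
central values, and taking `y` central gives `A = 0`. Comparing `A x y = 0` with `A y x = 0` yields
`⁅x, Ty⁆ = ⁅Tx, y⁆`, hence `T⁅x, y⁆ = 3⁅Tx, y⁆`. Conversely this relation extends from `𝔳` to `𝔫`
because both of its sides vanish on `𝔷` when `T𝔷 ⊆ 𝔷`, and it makes all three terms zero. -/

section BilinForm

open LinearMap (BilinForm)

variable {R M : Type*} [CommRing R] [AddCommGroup M] [Module R M] {B : BilinForm R M}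

theorem isTorsionFree_of_separatingLeft (hB : B.SeparatingLeft) : Module.IsTorsionFree R M :=
  (LinearMap.ker_eq_bot.mp
    (LinearMap.separatingLeft_iff_ker_eq_bot.mp hB)).moduleIsTorsionFree B (map_smul B)

theorem eq_zero_of_restrict_separatingLeft {W : Submodule R M} (hW : (B.restrict W).SeparatingLeft)
    {x : M} (hx : x ∈ W) (h : ∀ w ∈ W, B x w = 0) : x = 0 :=
  congrArg Subtype.val (hW ⟨x, hx⟩ fun w ↦ h w w.2)

theorem orthogonal_mem_invtSubmodule {T : Module.End R M} (hT : B.IsSkewAdjoint T)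
    {W : Submodule R M} (hW : W ∈ T.invtSubmodule) : B.orthogonal W ∈ T.invtSubmodule := by
  intro x hx w hw
  have hTw : B (T w) x = 0 := hx _ (hW hw)
  simpa [hTw] using hT w x

theorem isCompl_orthogonal_of_anisotropic {K V : Type*} [Field K] [AddCommGroup V] [Module K V]
    [FiniteDimensional K V] {B : BilinForm K V} (hB : B.IsRefl)
    (haniso : B.toQuadraticMap.Anisotropic) (W : Submodule K V) : IsCompl W (B.orthogonal W) :=
  (BilinForm.isCompl_orthogonal_iff_disjoint hB).2 <|
    Submodule.disjoint_def.2 fun x hx hx' ↦ haniso x (hx' x hx)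

end BilinForm

section LieAlgebra

open LieAlgebra
open LinearMap (BilinForm)

variable {R L : Type*} [CommRing R] [LieRing L] [LieAlgebra R L]

variable (R) in
theorem isCentral_iff_mem_center {x : L} : IsCentral x ↔ x ∈ center R L :=
  forall_congr' fun y ↦ by rw [← lie_skew, neg_eq_zero]

variable (R) in
theorem TwoStepNilpotent.lie_mem_center (h : TwoStepNilpotent L) (x y : L) :
    ⁅x, y⁆ ∈ center R L :=
  (isCentral_iff_mem_center R).1 (h.2 x y)

theorem inVperp_iff_mem_orthogonal_center {V : Type*} [LieRing V] [LieAlgebra ℝ V]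
    {B : BilinForm ℝ V} (hB : B.IsRefl) {x : V} :
    InVperp B x ↔ x ∈ B.orthogonal (center ℝ V).toSubmodule :=
  forall_congr' fun _ ↦ imp_congr (isCentral_iff_mem_center ℝ) hB.eq_iff

theorem map_lie_eq_smul_of_codisjoint_center {T : Module.End R L} {c : R} {W : Submodule R L}
    (hW : Codisjoint (center R L).toSubmodule W)
    (hTcenter : (center R L).toSubmodule ∈ T.invtSubmodule)
    (h : ∀ x y : L, x ∈ W → y ∈ W → T ⁅x, y⁆ = c • ⁅T x, y⁆) (x y : L) :
    T ⁅x, y⁆ = c • ⁅T x, y⁆ := by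
  obtain ⟨z, v, hz, hv, rfl⟩ := Submodule.codisjoint_iff_exists_add_eq.mp hW x
  obtain ⟨z', v', hz', hv', rfl⟩ := Submodule.codisjoint_iff_exists_add_eq.mp hW y
  have hzl := (isCentral_iff_mem_center R).2 hz
  have hTzl := (isCentral_iff_mem_center R).2 (hTcenter hz)
  calc T ⁅z + v, z' + v'⁆ = T ⁅v, v'⁆ := by simp [hzl _, hz' v]
    _ = c • ⁅T v, v'⁆ := h v v' hv hv'
    _ = c • ⁅T (z + v), z' + v'⁆ := by simp [hTzl _, hz' (T v)]

/-- The Koszul formula for a product `nab` on a Lie algebra with a bilinear form `B`, over any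
commutative ring; over `ℝ` this is `IsLeviCivita`. -/
def IsLeviCivitaProduct (B : BilinForm R L) (nab : L → L → L) : Prop :=
  ∀ x y z : L, 2 * B (nab x y) z = B ⁅x, y⁆ z - B ⁅y, z⁆ x + B ⁅z, x⁆ y

/-- The symmetrized covariant derivative `(∇_x T) y + (∇_y T) x` of `T` with respect to the product
`nab`; the Killing–Yano equation is its vanishing for all `x` and `y`. -/
def killingYanoDefect (nab : L → L → L) (T : Module.End R L) (x y : L) : L :=
  nab x (T y) - T (nab x y) + nab y (T x) - T (nab y x)

/-- The failure of `T` to satisfy the Leibniz rule with weights `1` and `2`, namely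
`T⁅x, y⁆ = ⁅Tx, y⁆ + 2⁅x, Ty⁆`; it is the obstruction to the Killing–Yano equation. -/
def weightedLeibnizDefect (T : Module.End R L) (x y : L) : L :=
  T ⁅x, y⁆ - ⁅T x, y⁆ - (2 : R) • ⁅x, T y⁆

variable {B : BilinForm R L} {nab : L → L → L} {T : Module.End R L}

theorem two_mul_apply_killingYanoDefect (hnab : IsLeviCivitaProduct B nab)
    (hT : B.IsSkewAdjoint T) (x y w : L) :
    2 * B (killingYanoDefect nab T x y) w =
      B (⁅x, T y⁆ - ⁅T x, y⁆) w + B (weightedLeibnizDefect T x w) y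
        + B (weightedLeibnizDefect T y w) x := by
  have apply_T (u v : L) : B (T u) v = -B u (T v) := by simpa using hT u v
  have koszul₁ := hnab x (T y) w
  have koszul₂ := hnab x y (T w)
  have koszul₃ := hnab y (T x) w
  have koszul₄ := hnab y x (T w)
  rw [← lie_skew w x] at koszul₁
  rw [← lie_skew (T w) x] at koszul₂
  rw [← lie_skew y (T x), ← lie_skew w y] at koszul₃
  rw [← lie_skew y x, ← lie_skew (T w) y] at koszul₄
  simp only [killingYanoDefect, weightedLeibnizDefect, map_add, map_sub, map_neg, map_smul,
    LinearMap.add_apply, LinearMap.sub_apply, LinearMap.neg_apply, LinearMap.smul_apply,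
    smul_eq_mul, apply_T] at koszul₁ koszul₂ koszul₃ koszul₄ ⊢
  linear_combination koszul₁ + koszul₂ + koszul₃ + koszul₄

theorem lie_map_eq_map_lie_of_weightedLeibnizDefect_eq_zero
    (h : ∀ x y : L, weightedLeibnizDefect T x y = 0) (x y : L) : ⁅x, T y⁆ = ⁅T x, y⁆ := by
  have hxy : T ⁅x, y⁆ - ⁅T x, y⁆ - (2 : R) • ⁅x, T y⁆ = 0 := h x y
  have hyx : T ⁅y, x⁆ - ⁅T y, x⁆ - (2 : R) • ⁅y, T x⁆ = 0 := h y x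
  rw [← lie_skew y x, ← lie_skew (T y) x, ← lie_skew y (T x), map_neg] at hyx
  linear_combination (norm := module) -hxy - hyx

theorem map_lie_eq_three_smul_of_weightedLeibnizDefect_eq_zero
    (h : ∀ x y : L, weightedLeibnizDefect T x y = 0) (x y : L) :
    T ⁅x, y⁆ = (3 : R) • ⁅T x, y⁆ := by
  have hxy : T ⁅x, y⁆ - ⁅T x, y⁆ - (2 : R) • ⁅x, T y⁆ = 0 := h x y
  rw [lie_map_eq_map_lie_of_weightedLeibnizDefect_eq_zero h] at hxy
  linear_combination (norm := module) hxy

theorem lie_map_eq_map_lie_of_map_lie_eq_smul [IsDomain R] [Module.IsTorsionFree R L] {c : R}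
    (hc : c ≠ 0) (h : ∀ x y : L, T ⁅x, y⁆ = c • ⁅T x, y⁆) (x y : L) : ⁅x, T y⁆ = ⁅T x, y⁆ := by
  refine smul_right_injective L hc ?_
  calc c • ⁅x, T y⁆ = -(c • ⁅T y, x⁆) := by rw [← lie_skew, smul_neg]
    _ = T ⁅x, y⁆ := by rw [← h, ← map_neg, lie_skew]
    _ = c • ⁅T x, y⁆ := h x y

theorem weightedLeibnizDefect_eq_zero_of_map_lie_eq_three_smul [IsDomain R]
    [Module.IsTorsionFree R L] [NeZero (3 : R)] (h : ∀ x y : L, T ⁅x, y⁆ = (3 : R) • ⁅T x, y⁆)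
    (x y : L) : weightedLeibnizDefect T x y = 0 := by
  rw [weightedLeibnizDefect, h, lie_map_eq_map_lie_of_map_lie_eq_smul three_ne_zero h]
  module

theorem apply_lie_map_eq_two_mul_swap (hnab : IsLeviCivitaProduct B nab)
    (hT : B.IsSkewAdjoint T) (hKY : ∀ x y : L, killingYanoDefect nab T x y = 0) {z z' : L}
    (hz : z ∈ center R L) (hz' : z' ∈ center R L) (y : L) :
    B ⁅T z, y⁆ z' = 2 * B ⁅T z', y⁆ z := by
  have h := two_mul_apply_killingYanoDefect hnab hT z y z'
  have hzl := (isCentral_iff_mem_center R).2 hz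
  simp only [hKY, weightedLeibnizDefect, hzl _, hz' _, map_zero, zero_sub, sub_zero, smul_zero,
    LinearMap.zero_apply, mul_zero, ← lie_skew y (T z'), map_neg, map_smul, LinearMap.neg_apply,
    LinearMap.smul_apply, smul_eq_mul] at h
  linear_combination h

theorem center_mem_invtSubmodule_of_killingYanoDefect_eq_zero [IsDomain R] [NeZero (3 : R)]
    (hcenter : (B.restrict (center R L).toSubmodule).SeparatingLeft)
    (hlie : ∀ x y : L, ⁅x, y⁆ ∈ center R L) (hnab : IsLeviCivitaProduct B nab)
    (hT : B.IsSkewAdjoint T) (hKY : ∀ x y : L, killingYanoDefect nab T x y = 0) :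
    (center R L).toSubmodule ∈ T.invtSubmodule := by
  intro z hz
  refine (isCentral_iff_mem_center R).1 fun y ↦ ?_
  refine eq_zero_of_restrict_separatingLeft hcenter (hlie (T z) y) fun z' hz' ↦ ?_
  have h₁ := apply_lie_map_eq_two_mul_swap hnab hT hKY hz hz' y
  have h₂ := apply_lie_map_eq_two_mul_swap hnab hT hKY hz' hz y
  have h₃ : 3 * B ⁅T z, y⁆ z' = 0 := by linear_combination -h₁ - 2 * h₂
  exact (mul_eq_zero.mp h₃).resolve_left three_ne_zero

theorem weightedLeibnizDefect_mem_center (hlie : ∀ x y : L, ⁅x, y⁆ ∈ center R L)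
    (hTcenter : (center R L).toSubmodule ∈ T.invtSubmodule) (x y : L) :
    weightedLeibnizDefect T x y ∈ center R L :=
  sub_mem (sub_mem (hTcenter (hlie x y)) (hlie (T x) y)) ((center R L).smul_mem _ (hlie x (T y)))

theorem weightedLeibnizDefect_eq_zero_of_killingYanoDefect_eq_zero
    (hcenter : (B.restrict (center R L).toSubmodule).SeparatingLeft)
    (hlie : ∀ x y : L, ⁅x, y⁆ ∈ center R L) (hnab : IsLeviCivitaProduct B nab)
    (hT : B.IsSkewAdjoint T) (hTcenter : (center R L).toSubmodule ∈ T.invtSubmodule)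
    (hKY : ∀ x y : L, killingYanoDefect nab T x y = 0) (x y : L) :
    weightedLeibnizDefect T x y = 0 := by
  have hmem := weightedLeibnizDefect_mem_center hlie hTcenter x y
  refine eq_zero_of_restrict_separatingLeft hcenter hmem fun z hz ↦ ?_
  have hzl := (isCentral_iff_mem_center R).2 hz
  have hTzl := (isCentral_iff_mem_center R).2 (hTcenter hz)
  have hxz : ⁅x, T z⁆ - ⁅T x, z⁆ = 0 := by rw [hTcenter hz x, hz (T x), sub_zero]
  have hzy : weightedLeibnizDefect T z y = 0 := by simp [weightedLeibnizDefect, hzl _, hTzl y]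
  have h := two_mul_apply_killingYanoDefect hnab hT x z y
  simpa [hKY, hxz, hzy] using h.symm

theorem killingYanoDefect_eq_zero_of_weightedLeibnizDefect_eq_zero [IsDomain R] [NeZero (2 : R)]
    (hB : B.SeparatingLeft) (hnab : IsLeviCivitaProduct B nab) (hT : B.IsSkewAdjoint T)
    (h : ∀ x y : L, weightedLeibnizDefect T x y = 0) (x y : L) :
    killingYanoDefect nab T x y = 0 := by
  refine hB _ fun w ↦ ?_
  have hw := two_mul_apply_killingYanoDefect hnab hT x y w
  rw [lie_map_eq_map_lie_of_weightedLeibnizDefect_eq_zero h, h, h] at hw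
  simpa [two_ne_zero] using hw

theorem statement_2_general [IsDomain R] [NeZero (2 : R)] [NeZero (3 : R)] (hrefl : B.IsRefl)
    (hB : B.Nondegenerate)
    (hcompl : IsCompl (center R L).toSubmodule (B.orthogonal (center R L).toSubmodule))
    (hlie : ∀ x y : L, ⁅x, y⁆ ∈ center R L) (hnab : IsLeviCivitaProduct B nab)
    (hT : B.IsSkewAdjoint T) :
    (∀ x y : L, killingYanoDefect nab T x y = 0) ↔
      (center R L).toSubmodule ∈ T.invtSubmodule ∧
      B.orthogonal (center R L).toSubmodule ∈ T.invtSubmodule ∧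
      ∀ x y : L, x ∈ B.orthogonal (center R L).toSubmodule →
        y ∈ B.orthogonal (center R L).toSubmodule → T ⁅x, y⁆ = (3 : R) • ⁅T x, y⁆ := by
  constructor
  · intro hKY
    have hcenter := (B.nondegenerate_restrict_of_disjoint_orthogonal hrefl hcompl.disjoint).1
    have hTcenter :=
      center_mem_invtSubmodule_of_killingYanoDefect_eq_zero hcenter hlie hnab hT hKY
    have hdefect :=
      weightedLeibnizDefect_eq_zero_of_killingYanoDefect_eq_zero hcenter hlie hnab hT hTcenter hKY
    exact ⟨hTcenter, orthogonal_mem_invtSubmodule hT hTcenter, fun x y _ _ ↦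
      map_lie_eq_three_smul_of_weightedLeibnizDefect_eq_zero hdefect x y⟩
  · rintro ⟨hTcenter, -, horth⟩
    have : Module.IsTorsionFree R L := isTorsionFree_of_separatingLeft hB.1
    have hall := map_lie_eq_smul_of_codisjoint_center hcompl.codisjoint hTcenter horth
    exact killingYanoDefect_eq_zero_of_weightedLeibnizDefect_eq_zero hB.1 hnab hT
      (weightedLeibnizDefect_eq_zero_of_map_lie_eq_three_smul hall)

end LieAlgebra

/-- on a 2-step nilpotent metric Lie algebra, a skew-symmetric
endomorphism T satisfies the Killing-Yano equation iff T(𝔷) ⊆ 𝔷 (hence T(𝔳) ⊆ 𝔳)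
and T⁅x,y⁆ = 3⁅Tx,y⁆ for all x,y ∈ 𝔳. -/
theorem statement_2 (V : Type*) [LieRing V] [LieAlgebra ℝ V] [FiniteDimensional ℝ V]
    (B : V →ₗ[ℝ] V →ₗ[ℝ] ℝ)
    (hsymm : ∀ x y : V, B x y = B y x) (hpos : ∀ x : V, x ≠ 0 → 0 < B x x)
    (h2 : TwoStepNilpotent V)
    (nab : V → V → V) (hLC : IsLeviCivita B nab)
    (T : V →ₗ[ℝ] V) (hskew : ∀ x y : V, B (T x) y = - B x (T y)) :
    (∀ x y : V, nab x (T y) - T (nab x y) + nab y (T x) - T (nab y x) = 0) ↔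
      ((∀ z : V, IsCentral z → IsCentral (T z)) ∧
       (∀ x : V, InVperp B x → InVperp B (T x)) ∧
       (∀ x y : V, InVperp B x → InVperp B y → T ⁅x, y⁆ = (3 : ℝ) • ⁅T x, y⁆)) := by
  have hrefl : LinearMap.BilinForm.IsRefl B := LinearMap.BilinForm.IsSymm.isRefl ⟨hsymm⟩
  have haniso : (LinearMap.BilinMap.toQuadraticMap B).Anisotropic :=
    fun x hx ↦ by_contra fun hne ↦ (hpos x hne).ne' hx
  have hB := hrefl.nondegenerate_iff_separatingLeft.2
    (LinearMap.BilinForm.separatingLeft_of_anisotropic haniso)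
  have hcompl := isCompl_orthogonal_of_anisotropic hrefl haniso
    (LieAlgebra.center ℝ V).toSubmodule
  simp only [inVperp_iff_mem_orthogonal_center hrefl, isCentral_iff_mem_center ℝ]
  exact statement_2_general hrefl hB hcompl (h2.lie_mem_center ℝ) hLC
    fun x y ↦ by simpa using hskew x y
end

section
/- Let 𝔤 be a finite-dimensional real Lie algebra with an inner product ⟨·,·⟩ such that ⁅𝔤,𝔤⁆ ∩ 𝔷(𝔤) ≠ {0}, where 𝔷(𝔤) is the center of 𝔤. Then there is no endomorphism T of 𝔤 which is simultaneously skew-symmetric (⟨Tx,y⟩ = −⟨x,Ty⟩ for all x,y), invertible, and parallel with respect to the Levi-Civita product of (𝔤,⟨·,·⟩). In particular, this holds for any inner product on a non-abelian nilpotent Lie algebra. -/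
/-!
Let `z` be a central element of `⁅𝔤, 𝔤⁆` and put `K = ∇_z`, `A = ∇_{Tz}`. As `z` is central, the
Koszul formula reads `2⟨Kx, y⟩ = -⟨⁅x, y⁆, z⟩`, so that `K z = 0` and, as `T` is parallel,
`ad (Tz) = A - TK` takes values in `z^⊥`. Expressing `⟨⁅Tz, ⁅x, y⁆⁆, z⟩ = 0` through the Jacobi
identity gives `⁅K, A⁆ = 2KTK`, hence `⁅TK, A⁆ = 2(TK)²`. Now `TK` is self-adjoint and its square
has trace zero, being a multiple of a commutator, so `TK = 0`. When `T` is injective this forces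
`K = 0`, which says that `z` is orthogonal to `⁅𝔤, 𝔤⁆ ∋ z`, and therefore `z = 0`.
-/

open LinearMap (BilinForm)

section CommRing

variable {R M L ι : Type*} [CommRing R] [AddCommGroup M] [Module R M]

theorem repr_mul_apply_self_of_isOrthoᵢ [Finite ι] {B : BilinForm R M} {b : Module.Basis ι R M}
    (hb : B.IsOrthoᵢ b) (i : ι) (x : M) : b.repr x i * B (b i) (b i) = B (b i) x := by
  cases nonempty_fintype ι
  conv_rhs => rw [← b.sum_repr x, map_sum]
  rw [Finset.sum_eq_single_of_mem i (Finset.mem_univ i)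
    fun j _ hji ↦ by rw [map_smul, LinearMap.isOrthoᵢ_def.1 hb i j hji.symm, smul_zero],
    map_smul, smul_eq_mul]

theorem eq_of_separatingLeft {B : BilinForm R M} (hB : B.SeparatingLeft) {x y : M}
    (h : ∀ w, B x w = B y w) : x = y :=
  LinearMap.ker_eq_bot.1 (LinearMap.separatingLeft_iff_ker_eq_bot.1 hB) (LinearMap.ext h)

theorem bilin_lie_swap [LieRing L] [LieAlgebra R L] (B : BilinForm R L) (x y w : L) :
    B ⁅x, y⁆ w = -B ⁅y, x⁆ w := by
  rw [← lie_skew, map_neg, LinearMap.neg_apply]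

end CommRing

section AdjointPair

variable {F M : Type*} [Field F] [LinearOrder F] [IsStrictOrderedRing F] [AddCommGroup M]
  [Module F M] {B : BilinForm F M}

theorem eq_zero_of_isAdjointPair_of_trace_mul_eq_zero [FiniteDimensional F M] (hB : B.IsSymm)
    (hpos : B.toQuadraticMap.PosDef) {f g : Module.End F M} (hfg : B.IsAdjointPair B f g)
    (htr : LinearMap.trace F M (g * f) = 0) : f = 0 := by
  have := invertibleOfNonzero (two_ne_zero' F)
  obtain ⟨b, hb⟩ := LinearMap.BilinForm.exists_orthogonal_basis
    (LinearMap.BilinForm.isSymm_iff.1 hB)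
  -- The diagonal entries of `g * f` in the basis `b` are `B (f bᵢ) (f bᵢ) / B bᵢ bᵢ ≥ 0`.
  have entry_mul (i) : b.repr (g (f (b i))) i * B (b i) (b i) = B (f (b i)) (f (b i)) := by
    rw [repr_mul_apply_self_of_isOrthoᵢ hb, hfg]
  have entry_nonneg (i) : 0 ≤ b.repr (g (f (b i))) i :=
    nonneg_of_mul_nonneg_left ((hpos.nonneg _).trans_eq (entry_mul i).symm) (hpos _ (b.ne_zero i))
  have sum_entry : ∑ i, b.repr (g (f (b i))) i = 0 := by
    simpa [LinearMap.trace_eq_matrix_trace F b, Matrix.trace, LinearMap.toMatrix_apply] using htr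
  refine b.ext fun i ↦ hpos.anisotropic _ ?_
  have entry_eq_zero := (Finset.sum_eq_zero_iff_of_nonneg fun i _ ↦ entry_nonneg i).1 sum_entry i
    (Finset.mem_univ i)
  rw [LinearMap.BilinMap.toQuadraticMap_apply, ← entry_mul, entry_eq_zero, zero_mul]

theorem eq_zero_of_isSelfAdjoint_of_lie_eq_smul_mul_self [FiniteDimensional F M]
    (hB : B.IsSymm) (hpos : B.toQuadraticMap.PosDef) {f a : Module.End F M}
    (hf : B.IsSelfAdjoint f) {c : F} (hc : c ≠ 0) (hfa : ⁅f, a⁆ = c • (f * f)) : f = 0 := by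
  refine eq_zero_of_isAdjointPair_of_trace_mul_eq_zero hB hpos hf ?_
  have smul_trace : c • LinearMap.trace F M (f * f) = 0 := by
    rw [← map_smul, ← hfa, LinearMap.trace_lie]
  exact (smul_eq_zero.1 smul_trace).resolve_left hc

end AdjointPair

/-- The endomorphism `T` is parallel for the product `nab`: it commutes with every `nab x`. -/
def IsParallel {R V : Type*} [Semiring R] [AddCommMonoid V] [Module R V] (nab : V → V → V)
    (T : Module.End R V) : Prop :=
  ∀ x y, nab x (T y) = T (nab x y)

namespace IsLeviCivita

variable {V : Type*} [LieRing V] [LieAlgebra ℝ V] {B : BilinForm ℝ V} {nab : V → V → V}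
  {T : Module.End ℝ V} {z : V}

/-- The covariant derivative `∇_x` as an endomorphism; linearity follows from the Koszul formula
because the metric is nondegenerate. -/
def covDeriv (h : IsLeviCivita B nab) (hB : B.SeparatingLeft) (x : V) : Module.End ℝ V where
  toFun := nab x
  map_add' y w := eq_of_separatingLeft hB fun t ↦ by
    have hsum := h x (y + w) t
    simp only [lie_add, add_lie, map_add, LinearMap.add_apply] at hsum ⊢
    linear_combination (hsum - h x y t - h x w t) / 2
  map_smul' r y := eq_of_separatingLeft hB fun t ↦ by
    have hsmul := h x (r • y) t
    simp only [lie_smul, smul_lie, map_smul, LinearMap.smul_apply, smul_eq_mul,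
      RingHom.id_apply] at hsmul ⊢
    linear_combination (hsmul - r * h x y t) / 2

@[simp]
theorem covDeriv_apply (h : IsLeviCivita B nab) (hB : B.SeparatingLeft) (x y : V) :
    h.covDeriv hB x y = nab x y := rfl

theorem bilin_apply_left (h : IsLeviCivita B nab) (hsymm : B.IsSymm) (x y w : V) :
    B (nab x y) w = -B y (nab x w) := by
  rw [hsymm.eq y]
  linear_combination (h x y w + h x w y + bilin_lie_swap B y x w
    + bilin_lie_swap B x w y - bilin_lie_swap B w y x) / 2

theorem sub_eq_lie (h : IsLeviCivita B nab) (hB : B.SeparatingLeft) (x y : V) :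
    nab x y - nab y x = ⁅x, y⁆ := eq_of_separatingLeft hB fun w ↦ by
  rw [map_sub, LinearMap.sub_apply]
  linear_combination (h x y w - h y x w - bilin_lie_swap B y x w
    + bilin_lie_swap B x w y - bilin_lie_swap B w y x) / 2

theorem two_mul_bilin_apply_of_isCentral (h : IsLeviCivita B nab) (hz : IsCentral z) (x y : V) :
    2 * B (nab z x) y = -B ⁅x, y⁆ z := by
  have hyz : ⁅y, z⁆ = 0 := by rw [← lie_skew, hz, neg_zero]
  simpa [hz x, hyz] using h z x y

theorem apply_comm_of_isCentral (h : IsLeviCivita B nab) (hB : B.SeparatingLeft)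
    (hz : IsCentral z) (x : V) : nab x z = nab z x := by
  rw [eq_comm, ← sub_eq_zero, h.sub_eq_lie hB, hz]

theorem apply_self_eq_zero_of_isCentral (h : IsLeviCivita B nab) (hB : B.SeparatingLeft)
    (hz : IsCentral z) : nab z z = 0 := hB _ fun y ↦ by
  simpa [hz y] using h.two_mul_bilin_apply_of_isCentral hz z y

theorem lie_map_eq_sub (h : IsLeviCivita B nab) (hB : B.SeparatingLeft)
    (hT : IsParallel nab T) (hz : IsCentral z) (x : V) :
    ⁅T z, x⁆ = nab (T z) x - T (nab z x) := by
  rw [← h.sub_eq_lie hB, hT, h.apply_comm_of_isCentral hB hz]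

theorem bilin_lie_map_self_eq_zero (h : IsLeviCivita B nab) (hB : B.SeparatingLeft)
    (hT : IsParallel nab T) (hz : IsCentral z) (x : V) : B ⁅T z, x⁆ z = 0 := by
  have hzTz : nab z (T z) = 0 := by rw [hT, h.apply_self_eq_zero_of_isCentral hB hz, map_zero]
  simpa [hzTz] using h.two_mul_bilin_apply_of_isCentral hz (T z) x

theorem bilin_apply_lie_map_add_eq_zero (h : IsLeviCivita B nab) (hB : B.SeparatingLeft)
    (hT : IsParallel nab T) (hz : IsCentral z) (x y : V) :
    B (nab z ⁅T z, x⁆) y + B (nab z x) ⁅T z, y⁆ = 0 := by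
  have jacobi : B ⁅⁅T z, x⁆, y⁆ z + B ⁅x, ⁅T z, y⁆⁆ z = 0 := by
    rw [← LinearMap.add_apply, ← map_add, ← leibniz_lie, h.bilin_lie_map_self_eq_zero hB hT hz]
  linear_combination (h.two_mul_bilin_apply_of_isCentral hz ⁅T z, x⁆ y
    + h.two_mul_bilin_apply_of_isCentral hz x ⁅T z, y⁆ - jacobi) / 2

theorem lie_covDeriv_of_isCentral (h : IsLeviCivita B nab) (hB : B.SeparatingLeft)
    (hsymm : B.IsSymm) (hskew : ∀ x y, B (T x) y = -B x (T y)) (hT : IsParallel nab T)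
    (hz : IsCentral z) :
    ⁅h.covDeriv hB z, h.covDeriv hB (T z)⁆
      = (2 : ℝ) • (h.covDeriv hB z * T * h.covDeriv hB z) := by
  refine LinearMap.ext fun x ↦ eq_of_separatingLeft hB fun y ↦ ?_
  have hsum := h.bilin_apply_lie_map_add_eq_zero hB hT hz x y
  simp only [h.lie_map_eq_sub hB hT hz, ← h.covDeriv_apply hB, map_sub,
    LinearMap.sub_apply] at hsum
  have hA := h.bilin_apply_left hsymm (T z) (nab z x) y
  have hTK := hskew (nab z x) (nab z y)
  have hK := h.bilin_apply_left hsymm z (T (nab z x)) y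
  simp only [Ring.lie_def, LinearMap.sub_apply, LinearMap.smul_apply, Module.End.mul_apply,
    map_sub, map_smul, smul_eq_mul, covDeriv_apply] at hsum ⊢
  linear_combination hsum - hA + hTK - hK

theorem commute_covDeriv (h : IsLeviCivita B nab) (hB : B.SeparatingLeft)
    (hT : IsParallel nab T) (x : V) : Commute T (h.covDeriv hB x) :=
  LinearMap.ext fun y ↦ (hT x y).symm

theorem isSelfAdjoint_mul_covDeriv (h : IsLeviCivita B nab) (hB : B.SeparatingLeft)
    (hsymm : B.IsSymm) (hskew : ∀ x y, B (T x) y = -B x (T y)) (hT : IsParallel nab T) (x : V) :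
    B.IsSelfAdjoint (T * h.covDeriv hB x) := fun y w ↦ by
  simp only [Module.End.mul_apply, covDeriv_apply]
  rw [hskew, h.bilin_apply_left hsymm, neg_neg, hT]

theorem lie_mul_covDeriv_of_isCentral (h : IsLeviCivita B nab) (hB : B.SeparatingLeft)
    (hsymm : B.IsSymm) (hskew : ∀ x y, B (T x) y = -B x (T y)) (hT : IsParallel nab T)
    (hz : IsCentral z) :
    ⁅T * h.covDeriv hB z, h.covDeriv hB (T z)⁆
      = (2 : ℝ) • (T * h.covDeriv hB z * (T * h.covDeriv hB z)) := by
  set K := h.covDeriv hB z with hK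
  set A := h.covDeriv hB (T z) with hA
  calc ⁅T * K, A⁆ = T * ⁅K, A⁆ := by
        rw [Ring.lie_def, Ring.lie_def, mul_sub, mul_assoc, ← mul_assoc A T,
          ← (h.commute_covDeriv hB hT (T z)).eq, mul_assoc]
    _ = (2 : ℝ) • (T * K * (T * K)) := by
        rw [hK, hA, h.lie_covDeriv_of_isCentral hB hsymm hskew hT hz, mul_smul_comm]
        simp only [mul_assoc]

theorem map_apply_eq_zero_of_isCentral [FiniteDimensional ℝ V] (h : IsLeviCivita B nab)
    (hsymm : B.IsSymm) (hpos : B.toQuadraticMap.PosDef)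
    (hskew : ∀ x y, B (T x) y = -B x (T y)) (hT : IsParallel nab T) (hz : IsCentral z) (x : V) :
    T (nab z x) = 0 := by
  have hB := LinearMap.BilinForm.separatingLeft_of_anisotropic hpos.anisotropic
  have hTK : T * h.covDeriv hB z = 0 :=
    eq_zero_of_isSelfAdjoint_of_lie_eq_smul_mul_self hsymm hpos
      (h.isSelfAdjoint_mul_covDeriv hB hsymm hskew hT z) two_ne_zero
      (h.lie_mul_covDeriv_of_isCentral hB hsymm hskew hT hz)
  exact LinearMap.congr_fun hTK x

theorem bilin_eq_zero_of_mem_span_lie (h : IsLeviCivita B nab) (hz : IsCentral z)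
    (hnab : ∀ x, nab z x = 0) {v : V}
    (hv : v ∈ Submodule.span ℝ {u : V | ∃ a b : V, u = ⁅a, b⁆}) : B v z = 0 := by
  suffices Submodule.span ℝ {u : V | ∃ a b : V, u = ⁅a, b⁆} ≤ LinearMap.ker (B.flip z) from this hv
  rw [Submodule.span_le]
  rintro _ ⟨a, b, rfl⟩
  simpa [hnab] using h.two_mul_bilin_apply_of_isCentral hz a b

end IsLeviCivita

/-- if ⁅𝔤,𝔤⁆ ∩ 𝔷(𝔤) ≠ 0 then 𝔤 carries no skew-symmetric invertible
parallel tensor. -/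
theorem statement_8 (V : Type*) [LieRing V] [LieAlgebra ℝ V] [FiniteDimensional ℝ V]
    (B : V →ₗ[ℝ] V →ₗ[ℝ] ℝ)
    (hsymm : ∀ x y : V, B x y = B y x) (hpos : ∀ x : V, x ≠ 0 → 0 < B x x)
    (hcap : ∃ x : V, x ≠ 0 ∧ IsCentral x ∧
      x ∈ Submodule.span ℝ {u : V | ∃ a b : V, u = ⁅a, b⁆})
    (nab : V → V → V) (hLC : IsLeviCivita B nab) :
    ¬ ∃ T : V →ₗ[ℝ] V, (∀ x y : V, B (T x) y = - B x (T y)) ∧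
        Function.Bijective T ∧ ∀ x y : V, nab x (T y) = T (nab x y) := by
  rintro ⟨T, hskew, hbij, hT⟩
  obtain ⟨z, hz0, hz, hzspan⟩ := hcap
  have hK (x : V) : nab z x = 0 := hbij.injective <| by
    rw [map_zero, hLC.map_apply_eq_zero_of_isCentral ⟨hsymm⟩ hpos hskew hT hz]
  exact (hpos z hz0).ne' (hLC.bilin_eq_zero_of_mem_span_lie hz hK hzspan)
end
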